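/- arXiv:1502.06338 — 4 statements merged into one kernel-verified Lean document; each statement's English description precedes it below -/
import Mathlib

section
/- (Light-tail limit of geometric sums.) Let φ : ℕ → ℝ with φ_i ≥ 0, φ_0 = 0, ∑_{i=1}^∞ φ_i = 1, and assume m := ∑_{i=1}^∞ i φ_i < ∞. Let (a_n)_{n≥1} satisfy 0 < a_n < 1 and n(1−a_n) → λ for some λ > 0. For each n, let I^n be geometric with P[I^n = i] = a_n^i(1−a_n), let (X^j)_{j≥1} be iid positive-integer-valued random variables with P[X^1 = i] = φ_i, independent of I^n, and set Y^n = ∑_{j=1}^{I^n} X^j. Then Y^n/n converges in distribution, as n → ∞, to an exponential random variable with rate λ/m (i.e. with density (λ/m)e^{−(λ/m)x} on [0,∞)). -/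
open MeasureTheory ProbabilityTheory Filter Set

/-- Convolution powers of a sequence. -/
noncomputable def convPow (φ : ℕ → ℝ) : ℕ → ℕ → ℝ
  | 0 => fun i => if i = 0 then 1 else 0
  | (l + 1) => fun k => ∑ j ∈ Finset.range (k + 1), convPow φ l j * φ (k - j)

/-- ψ^a_i = ∑_{l=0}^∞ a^l (φ^{*l})_i. -/
noncomputable def psiSeq (a : ℝ) (φ : ℕ → ℝ) (i : ℕ) : ℝ :=
  ∑' l : ℕ, a ^ l * convPow φ l i

/-- Fourier transform of a sequence indexed by ℕ. -/
noncomputable def fourierSeq (f : ℕ → ℝ) (z : ℝ) : ℂ :=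
  ∑' k : ℕ, (f k : ℂ) * Complex.exp (-(2 * Real.pi * Complex.I * k * z))

/-- Mittag-Leffler function E_{α,α}. -/
noncomputable def mittagLeffler (α u : ℝ) : ℝ :=
  ∑' k : ℕ, u ^ k / Real.Gamma (α * k + α)

/-- f^{α,λ}. -/
noncomputable def mlDensity (α lam s : ℝ) : ℝ :=
  lam * s ^ (α - 1) * mittagLeffler α (-lam * s ^ α)

/-- F^{α,λ}. -/
noncomputable def mlCDF (α lam x : ℝ) : ℝ :=
  ∫ s in (0:ℝ)..x, mlDensity α lam s

/-! Conditioning on the number of terms, a geometric sum of copies of `X` has characteristic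
function `(1 - a) / (1 - a g(t))`, where `g` is that of `X`. Rescaling by `b` replaces `g(t)` by
`g(t / b) = 1 + i m t / b + o(1 / b)` with `m` the mean of `X`, so when `b (1 - a) → λ` the
quotient, with both terms multiplied by `b`, tends to `λ / (λ - i m t)`. This is the characteristic
function of the exponential distribution of rate `λ / m`, and Lévy's continuity theorem concludes.
-/

open scoped Topology

section CountableIntegral

variable {α E : Type*} [Countable α] [MeasurableSpace α] [MeasurableSingletonClass α]
  [NormedAddCommGroup E] [NormedSpace ℝ E] [FiniteDimensional ℝ E]

lemma integral_eq_tsum_measureReal_singleton (μ : Measure α) [IsFiniteMeasure μ] (f : α → E) :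
    ∫ x, f x ∂μ = ∑' x, μ.real {x} • f x := by
  conv_lhs => rw [← Measure.sum_smul_dirac μ]
  exact integral_sum_dirac fun x ↦ measure_ne_top μ {x}

end CountableIntegral

lemma sum_Icc_one_eq_sum_range {M : Type*} [AddCommMonoid M] (f : ℕ → M) (n : ℕ) :
    ∑ j ∈ Finset.Icc 1 n, f j = ∑ j ∈ Finset.range n, f (j + 1) := by
  rw [← Finset.Ico_add_one_right_eq_Icc, Finset.sum_Ico_eq_sum_range, Nat.add_sub_cancel]
  simp_rw [add_comm]

lemma tsum_le_of_hasSum_natCast_mul {φ : ℕ → ℝ} {m : ℝ} (hφ : ∀ i, 0 ≤ φ i) (hφ0 : φ 0 = 0)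
    (hm : HasSum (fun i : ℕ ↦ (i : ℝ) * φ i) m) : ∑' i, φ i ≤ m := by
  have hle (i : ℕ) : φ i ≤ i * φ i := by
    rcases i.eq_zero_or_pos with rfl | hi
    · simp [hφ0]
    · exact le_mul_of_one_le_left (hφ i) (mod_cast hi)
  rw [← hm.tsum_eq]
  exact (hm.summable.of_nonneg_of_le hφ hle).tsum_le_tsum hle hm.summable

lemma integral_natCast_eq_of_hasSum {Ω : Type*} {mΩ : MeasurableSpace Ω} {P : Measure Ω}
    [IsFiniteMeasure P] {X : Ω → ℕ} (hX : AEMeasurable X P) {φ : ℕ → ℝ}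
    (hφ : ∀ i, 1 ≤ i → P.real {ω | X ω = i} = φ i) {m : ℝ}
    (hm : HasSum (fun i : ℕ ↦ (i : ℝ) * φ i) m) : ∫ ω, (X ω : ℝ) ∂P = m := by
  have hterm (i : ℕ) : (P.map X).real {i} • (i : ℝ) = i * φ i := by
    rcases i.eq_zero_or_pos with rfl | hi
    · simp
    · rw [← hφ i hi, smul_eq_mul, mul_comm,
        map_measureReal_apply_of_aemeasurable hX (measurableSet_singleton i)]
      rfl
  rw [← integral_map (f := fun i : ℕ ↦ (i : ℝ)) hX (by fun_prop),
    integral_eq_tsum_measureReal_singleton, tsum_congr hterm, hm.tsum_eq]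

lemma integral_pow_of_geometric {ν : Measure ℕ} [IsFiniteMeasure ν] {a : ℝ}
    (hν : ∀ i, ν.real {i} = a ^ i * (1 - a)) {z : ℂ} (hz : ‖a * z‖ < 1) :
    ∫ n, z ^ n ∂ν = (1 - a) / (1 - a * z) := by
  have hterm (n : ℕ) : ν.real {n} • z ^ n = (1 - a) * (a * z) ^ n := by
    rw [hν, Complex.real_smul, mul_pow]
    push_cast
    ring
  rw [integral_eq_tsum_measureReal_singleton]
  simp_rw [hterm]
  rw [tsum_mul_left, tsum_geometric_of_norm_lt_one hz, div_eq_mul_inv]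

section Exponential

variable {r : ℝ}

lemma integral_expMeasure {E : Type*} [NormedAddCommGroup E] [NormedSpace ℝ E] (hr : 0 < r)
    (g : ℝ → E) :
    ∫ x, g x ∂expMeasure r = ∫ x in Ici (0 : ℝ), (r * Real.exp (-r * x)) • g x := by
  have hdensity : expMeasure r = volume.withDensity (exponentialPDF r) := rfl
  rw [hdensity, integral_withDensity_eq_integral_toReal_smul
    (by unfold exponentialPDF; fun_prop) (by simp [exponentialPDF]),
    ← integral_indicator measurableSet_Ici]
  congr 1 with x
  by_cases hx : 0 ≤ x
  · have : 0 ≤ r * Real.exp (-(r * x)) := by positivity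
    simp [exponentialPDF_of_nonneg hx, hx, this]
  · simp [exponentialPDF_of_neg (not_le.1 hx), hx]

lemma charFun_expMeasure (hr : 0 < r) (t : ℝ) :
    charFun (expMeasure r) t = r / (r - t * Complex.I) := by
  have hre : (-r + t * Complex.I).re < 0 := by simpa using hr
  have hexp (x : ℝ) : (r * Real.exp (-r * x)) • Complex.exp (t * x * Complex.I) =
      r * Complex.exp ((-r + t * Complex.I) * x) := by
    rw [Complex.real_smul]
    push_cast
    rw [mul_assoc, ← Complex.exp_add]
    ring_nf
  rw [charFun_apply_real, integral_expMeasure hr, integral_Ici_eq_integral_Ioi]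
  simp_rw [hexp]
  rw [integral_const_mul, integral_exp_mul_complex_Ioi hre, Complex.ofReal_zero, mul_zero,
    Complex.exp_zero, neg_div, ← div_neg, mul_one_div, neg_add_eq_sub, neg_sub]

lemma charFun_expMeasure_div {m : ℝ} (hr : 0 < r) (hm : 0 < m) (t : ℝ) :
    charFun (expMeasure (r / m)) t = r / (r - t * (Complex.I * m)) := by
  have hm' : (m : ℂ) ≠ 0 := Complex.ofReal_ne_zero.2 hm.ne'
  rw [charFun_expMeasure (div_pos hr hm), ← mul_div_mul_right _ _ hm', Complex.ofReal_div,
    div_mul_cancel₀ _ hm', sub_mul, div_mul_cancel₀ _ hm', mul_assoc]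

end Exponential

lemma hasDerivAt_charFun_zero {μ : Measure ℝ} [IsFiniteMeasure μ] (hμ : Integrable id μ) :
    HasDerivAt (charFun μ) (Complex.I * (μ[id] : ℝ)) 0 := by
  have hLp : MemLp id (1 : ℕ) μ := by simpa [memLp_one_iff_integrable] using hμ
  have hdiff : DifferentiableAt ℝ (charFun μ) 0 :=
    (contDiff_charFun hLp).contDiffAt.differentiableAt (by simp)
  have hderiv : deriv (charFun μ) 0 = Complex.I * (μ[id] : ℝ) := by
    simpa using iteratedDeriv_charFun_zero hLp
  exact hderiv ▸ hdiff.hasDerivAt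

section Independence

variable {Ω : Type*} {mΩ : MeasurableSpace Ω} {P : Measure Ω}

lemma indepFun_pi_of_forall_ne {ι κ : Type*} {β : ι → Type*} [∀ i, MeasurableSpace (β i)]
    {X : ∀ i, Ω → β i} (hX : ∀ i, Measurable (X i)) (hindep : iIndepFun X P)
    {i : ι} {e : κ → ι} (he : ∀ k, e k ≠ i) :
    IndepFun (X i) (fun ω k ↦ X (e k) ω) P := by
  have hdisj : Disjoint {i} (range e) := by
    rw [disjoint_singleton_left]
    rintro ⟨k, hk⟩
    exact he k hk
  rw [IndepFun_iff_Indep]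
  refine indep_of_indep_of_le
    (indep_iSup_of_disjoint (fun j ↦ (hX j).comap_le) hindep.iIndep hdisj) ?_ ?_
  · simp
  · rw [MeasurableSpace.pi, MeasurableSpace.comap_iSup]
    refine iSup_le fun k ↦ ?_
    rw [MeasurableSpace.comap_comp]
    exact le_iSup₂_of_le (e k) (mem_range_self k) le_rfl

lemma indepFun_of_iIndepFun_ite {β : Type*} [MeasurableSpace β] {Y : Ω → β} {X : ℕ → Ω → β}
    (hY : Measurable Y) (hX : ∀ j, Measurable (X j))
    (hindep : iIndepFun (fun j ↦ if j = 0 then Y else X j) P) :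
    IndepFun Y (fun ω j ↦ X (j + 1) ω) P :=
  indepFun_pi_of_forall_ne (X := fun j ↦ if j = 0 then Y else X j)
    (by rintro (_ | j) <;> simp [hY, hX]) hindep Nat.succ_ne_zero

lemma integral_comp_prodMk_of_indepFun {α β E : Type*} [MeasurableSpace α] [MeasurableSpace β]
    [NormedAddCommGroup E] [NormedSpace ℝ E] [IsFiniteMeasure P] {Y : Ω → α} {Z : Ω → β}
    (hY : AEMeasurable Y P) (hZ : AEMeasurable Z P) (hYZ : IndepFun Y Z P) {f : α × β → E}
    (hf : Integrable f ((P.map Y).prod (P.map Z))) :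
    ∫ ω, f (Y ω, Z ω) ∂P = ∫ y, ∫ ω, f (y, Z ω) ∂P ∂P.map Y := by
  have hlaw := hYZ.map_prod_eq_prod_map_map hY hZ
  rw [← integral_map (hY.prodMk hZ) (hlaw ▸ hf.aestronglyMeasurable), hlaw, integral_prod f hf]
  refine integral_congr_ae ?_
  filter_upwards [hf.aestronglyMeasurable.prodMk_left] with y hy
  exact integral_map hZ hy

end Independence

section RandomSum

variable {Ω E : Type*} {mΩ : MeasurableSpace Ω} {P : Measure Ω} [MeasurableSpace E]
  {N : Ω → ℕ} {X : ℕ → Ω → E}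

lemma measurable_sum_range [AddCommMonoid E] [MeasurableAdd₂ E] :
    Measurable fun p : ℕ × (ℕ → E) ↦ ∑ j ∈ Finset.range p.1, p.2 j :=
  measurable_from_prod_countable_right fun n ↦ by
    change Measurable fun x : ℕ → E ↦ ∑ j ∈ Finset.range n, x j
    fun_prop

lemma aemeasurable_random_sum [AddCommMonoid E] [MeasurableAdd₂ E] (hN : AEMeasurable N P)
    (hX : ∀ j, AEMeasurable (X j) P) :
    AEMeasurable (fun ω ↦ ∑ j ∈ Finset.range (N ω), X j ω) P :=
  measurable_sum_range.comp_aemeasurable (hN.prodMk (aemeasurable_pi_lambda _ hX))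

variable [NormedAddCommGroup E] [InnerProductSpace ℝ E] [BorelSpace E]
  [SecondCountableTopology E]

lemma charFun_map_sum_range [IsFiniteMeasure P] (hindep : iIndepFun X P)
    (hident : ∀ j, IdentDistrib (X j) (X 0) P P) (n : ℕ) (t : E) :
    charFun (P.map fun ω ↦ ∑ j ∈ Finset.range n, X j ω) t = charFun (P.map (X 0)) t ^ n := by
  rw [(hindep.restrict _).charFun_map_fun_finsetSum_eq_prod
    fun j _ ↦ (hident j).aemeasurable_fst]
  simp [fun j ↦ (hident j).map_eq]

lemma charFun_map_random_sum [IsFiniteMeasure P] (hN : AEMeasurable N P)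
    (hindep : iIndepFun X P) (hident : ∀ j, IdentDistrib (X j) (X 0) P P)
    (hNX : IndepFun N (fun ω j ↦ X j ω) P) (t : E) :
    charFun (P.map fun ω ↦ ∑ j ∈ Finset.range (N ω), X j ω) t =
      ∫ n, charFun (P.map (X 0)) t ^ n ∂P.map N := by
  have hX (j : ℕ) : AEMeasurable (X j) P := (hident j).aemeasurable_fst
  let e : E → ℂ := fun x ↦ Complex.exp (inner ℝ x t * Complex.I)
  have he : Measurable e := by fun_prop
  have hint : Integrable (fun p : ℕ × (ℕ → E) ↦ e (∑ j ∈ Finset.range p.1, p.2 j))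
      ((P.map N).prod (P.map fun ω j ↦ X j ω)) :=
    .of_bound (he.comp measurable_sum_range).aestronglyMeasurable 1
      (ae_of_all _ fun p ↦ (Complex.norm_exp_ofReal_mul_I _).le)
  calc charFun (P.map fun ω ↦ ∑ j ∈ Finset.range (N ω), X j ω) t
      = ∫ ω, e (∑ j ∈ Finset.range (N ω), X j ω) ∂P :=
        integral_map (aemeasurable_random_sum hN hX) he.aestronglyMeasurable
    _ = ∫ n, ∫ ω, e (∑ j ∈ Finset.range n, X j ω) ∂P ∂P.map N :=
        integral_comp_prodMk_of_indepFun hN (aemeasurable_pi_lambda _ hX) hNX hint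
    _ = ∫ n, charFun (P.map (X 0)) t ^ n ∂P.map N := by
        congr 1 with n
        rw [← charFun_map_sum_range hindep hident, charFun_apply,
          integral_map (by fun_prop) he.aestronglyMeasurable]

lemma charFun_map_geometric_sum [IsProbabilityMeasure P] {a : ℝ} (ha : |a| < 1)
    (hN : AEMeasurable N P) (hNlaw : ∀ i, P.real {ω | N ω = i} = a ^ i * (1 - a))
    (hindep : iIndepFun X P) (hident : ∀ j, IdentDistrib (X j) (X 0) P P)
    (hNX : IndepFun N (fun ω j ↦ X j ω) P) (t : E) :
    charFun (P.map fun ω ↦ ∑ j ∈ Finset.range (N ω), X j ω) t =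
      (1 - a) / (1 - a * charFun (P.map (X 0)) t) := by
  have := Measure.isProbabilityMeasure_map (hident 0).aemeasurable_fst
  rw [charFun_map_random_sum hN hindep hident hNX]
  refine integral_pow_of_geometric (fun i ↦ ?_) ?_
  · rw [map_measureReal_apply_of_aemeasurable hN (measurableSet_singleton i)]
    exact hNlaw i
  · calc ‖a * charFun (P.map (X 0)) t‖ ≤ |a| * 1 := by
          rw [norm_mul, Complex.norm_real, Real.norm_eq_abs]
          gcongr
          exact norm_charFun_le_one t
      _ < 1 := by rwa [mul_one]

end RandomSum

section Asymptotics

variable {ι : Type*} {l : Filter ι} {a b : ι → ℝ} {lam : ℝ}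

lemma tendsto_one_of_tendsto_mul_one_sub (hb : Tendsto b l atTop)
    (hab : Tendsto (fun i ↦ b i * (1 - a i)) l (𝓝 lam)) : Tendsto a l (𝓝 1) := by
  have hsub : Tendsto (fun i ↦ 1 - b i * (1 - a i) * (b i)⁻¹) l (𝓝 (1 - lam * 0)) :=
    (hab.mul hb.inv_tendsto_atTop).const_sub 1
  rw [mul_zero, sub_zero] at hsub
  refine hsub.congr' ?_
  filter_upwards [hb.eventually_ne_atTop 0] with i hi
  field_simp
  ring

lemma tendsto_smul_sub_of_hasDerivAt {E : Type*} [NormedAddCommGroup E] [NormedSpace ℝ E]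
    {g : ℝ → E} {g' : E} (hg : HasDerivAt g g' 0) (hb : Tendsto b l atTop) (t : ℝ) :
    Tendsto (fun i ↦ b i • (g ((b i)⁻¹ * t) - g 0)) l (𝓝 (t • g')) := by
  have hgt : HasDerivAt (fun x ↦ g (x * t)) (t • g') 0 :=
    HasDerivAt.scomp (0 : ℝ) (by simpa using hg)
      (by simpa using (hasDerivAt_id (0 : ℝ)).mul_const t)
  have hb_inv : Tendsto (fun i ↦ (b i)⁻¹) l (𝓝[≠] 0) :=
    tendsto_nhdsWithin_iff.2 ⟨hb.inv_tendsto_atTop,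
      (hb.eventually_ne_atTop 0).mono fun i hi ↦ inv_ne_zero hi⟩
  simpa [Function.comp_def] using hgt.tendsto_slope_zero.comp hb_inv

lemma tendsto_geometric_pgf {g : ℝ → ℂ} {g' : ℂ} (hg0 : g 0 = 1) (hg : HasDerivAt g g' 0)
    (hb : Tendsto b l atTop) (hab : Tendsto (fun i ↦ b i * (1 - a i)) l (𝓝 lam)) {t : ℝ}
    (hne : (lam : ℂ) - t * g' ≠ 0) :
    Tendsto (fun i ↦ (1 - a i) / (1 - a i * g ((b i)⁻¹ * t))) l (𝓝 (lam / (lam - t * g'))) := by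
  have hnum : Tendsto (fun i ↦ (b i : ℂ) * (1 - a i)) l (𝓝 lam) := by exact_mod_cast hab.ofReal
  have hslope := tendsto_smul_sub_of_hasDerivAt hg hb t
  have ha : Tendsto (fun i ↦ (a i : ℂ)) l (𝓝 1) :=
    mod_cast (tendsto_one_of_tendsto_mul_one_sub hb hab).ofReal
  have hden : Tendsto (fun i ↦ (b i : ℂ) * (1 - a i * g ((b i)⁻¹ * t))) l
      (𝓝 (lam - t * g')) := by
    convert hnum.sub (ha.mul hslope) using 2 with i
    · rw [hg0, Complex.real_smul]
      ring
    · rw [one_mul, Complex.real_smul]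
  refine (hnum.div hden hne).congr' ?_
  filter_upwards [hb.eventually_ne_atTop 0] with i hi
  exact mul_div_mul_left _ _ (Complex.ofReal_ne_zero.2 hi)

end Asymptotics

lemma tendsto_integral_of_tendstoInDistribution {ι E Ω' : Type*} {Ω : ι → Type*}
    {mΩ : ∀ i, MeasurableSpace (Ω i)} {mΩ' : MeasurableSpace Ω'} {μ : ∀ i, Measure (Ω i)}
    [∀ i, IsProbabilityMeasure (μ i)] {ν : Measure Ω'} [IsProbabilityMeasure ν]
    [TopologicalSpace E] [MeasurableSpace E] [OpensMeasurableSpace E]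
    {Y : ∀ i, Ω i → E} {Z : Ω' → E} {l : Filter ι} (h : TendstoInDistribution Y l Z μ ν)
    (f : BoundedContinuousFunction E ℝ) :
    Tendsto (fun i ↦ ∫ ω, f (Y i ω) ∂μ i) l (𝓝 (∫ ω, f (Z ω) ∂ν)) := by
  have := ProbabilityMeasure.tendsto_iff_forall_integral_tendsto.1 h.tendsto f
  simpa [integral_map, h.aemeasurable_limit, h.forall_aemeasurable,
    f.continuous.measurable.aestronglyMeasurable] using this

section Limit

variable {Ω Ω' : Type*} {mΩ : MeasurableSpace Ω} {mΩ' : MeasurableSpace Ω'} {P : Measure Ω}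
  {P' : Measure Ω'} [IsProbabilityMeasure P] {a b : ℕ → ℝ} {lam : ℝ} {N : ℕ → Ω → ℕ}
  {X : ℕ → Ω → ℝ} {Z : Ω' → ℝ}

lemma tendsto_charFun_geometric_sum (hb : Tendsto b atTop atTop) (hlam : 0 < lam)
    (hab : Tendsto (fun n ↦ b n * (1 - a n)) atTop (𝓝 lam)) (hmean : 0 < P[X 0])
    (hN : ∀ n, AEMeasurable (N n) P)
    (hNlaw : ∀ᶠ n in atTop, ∀ i, P.real {ω | N n ω = i} = a n ^ i * (1 - a n))
    (hindep : iIndepFun X P) (hident : ∀ j, IdentDistrib (X j) (X 0) P P)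
    (hNX : ∀ n, IndepFun (N n) (fun ω j ↦ X j ω) P) (t : ℝ) :
    Tendsto (fun n ↦ charFun (P.map fun ω ↦ (b n)⁻¹ * ∑ j ∈ Finset.range (N n ω), X j ω) t) atTop
      (𝓝 (charFun (expMeasure (lam / P[X 0])) t)) := by
  have hX (j : ℕ) : AEMeasurable (X j) P := (hident j).aemeasurable_fst
  have := Measure.isProbabilityMeasure_map (hX 0)
  have hint : Integrable id (P.map (X 0)) :=
    (integrable_map_measure (by fun_prop) (hX 0)).2 (.of_integral_ne_zero hmean.ne')
  have hderiv : HasDerivAt (charFun (P.map (X 0))) (Complex.I * (P[X 0] : ℝ)) 0 := by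
    have hmap : (P.map (X 0))[id] = P[X 0] := integral_map (hX 0) aestronglyMeasurable_id
    exact hmap ▸ hasDerivAt_charFun_zero hint
  have hne : (lam : ℂ) - t * (Complex.I * (P[X 0] : ℝ)) ≠ 0 := fun h ↦ hlam.ne' <| by
    simpa using congrArg Complex.re h
  have ha := tendsto_one_of_tendsto_mul_one_sub hb hab
  rw [charFun_expMeasure_div hlam hmean]
  refine (tendsto_geometric_pgf (by simp) hderiv hb hab hne).congr' ?_
  filter_upwards [hNlaw, hb.eventually_gt_atTop 0, hab.eventually_const_lt hlam,
    ha.eventually_const_lt zero_lt_one] with n hn hbn hpos han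
  have han' : |a n| < 1 := by
    rw [abs_of_pos han]
    linarith [pos_of_mul_pos_right hpos hbn.le]
  rw [charFun_map_mul_comp (aemeasurable_random_sum (hN n) hX),
    charFun_map_geometric_sum han' (hN n) hn hindep hident (hNX n)]

theorem geometric_sum_light_tail_limit_general [IsProbabilityMeasure P']
    (hb : Tendsto b atTop atTop) (hlam : 0 < lam)
    (hab : Tendsto (fun n ↦ b n * (1 - a n)) atTop (𝓝 lam)) (hmean : 0 < P[X 0])
    (hN : ∀ n, AEMeasurable (N n) P)
    (hNlaw : ∀ᶠ n in atTop, ∀ i, P.real {ω | N n ω = i} = a n ^ i * (1 - a n))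
    (hindep : iIndepFun X P) (hident : ∀ j, IdentDistrib (X j) (X 0) P P)
    (hNX : ∀ n, IndepFun (N n) (fun ω j ↦ X j ω) P)
    (hZ : HasLaw Z (expMeasure (lam / P[X 0])) P') :
    TendstoInDistribution (fun n ω ↦ (b n)⁻¹ * ∑ j ∈ Finset.range (N n ω), X j ω) atTop Z
      (fun _ ↦ P) P' where
  forall_aemeasurable n :=
    (aemeasurable_random_sum (hN n) fun j ↦ (hident j).aemeasurable_fst).const_mul _
  tendsto := by
    refine ProbabilityMeasure.tendsto_iff_tendsto_charFun.2 fun t ↦ ?_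
    rw! [hZ.map_eq]
    exact tendsto_charFun_geometric_sum hb hlam hab hmean hN hNlaw hindep hident hNX t

end Limit

/-- light-tail limit of geometric sums: `Y^n / n` converges in
distribution to an exponential random variable with rate `λ/m`. -/
theorem geometric_sum_light_tail_limit
    {Ω : Type*} [MeasurableSpace Ω] (P : Measure Ω) [IsProbabilityMeasure P]
    (φ : ℕ → ℝ) (hφnn : ∀ i, 0 ≤ φ i) (hφ0 : φ 0 = 0) (hφsum : ∑' i : ℕ, φ i = 1)
    (m : ℝ) (hm : HasSum (fun i : ℕ => (i : ℝ) * φ i) m)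
    (a : ℕ → ℝ) (ha : ∀ n, 1 ≤ n → 0 < a n ∧ a n < 1)
    (lam : ℝ) (hlam : 0 < lam)
    (haconv : Tendsto (fun n : ℕ => (n : ℝ) * (1 - a n)) atTop (nhds lam))
    (I : ℕ → Ω → ℕ) (X : ℕ → Ω → ℕ)
    (hImeas : ∀ n, Measurable (I n)) (hXmeas : ∀ j, Measurable (X j))
    -- for each `n`, `I^n` is geometric with parameter `1 - a_n`
    (hIlaw : ∀ n, 1 ≤ n → ∀ i : ℕ, (P {ω | I n ω = i}).toReal = a n ^ i * (1 - a n))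
    -- the `X^j` are positive-integer valued, iid with `P[X^1 = i] = φ_i`
    (hXpos : ∀ j ω, 1 ≤ X j ω)
    (hXlaw : ∀ i : ℕ, 1 ≤ i → (P {ω | X 1 ω = i}).toReal = φ i)
    (hXid : ∀ j, 1 ≤ j → Measure.map (X j) P = Measure.map (X 1) P)
    -- for each `n`, the family `I^n, X^1, X^2, …` is mutually independent
    (hindep : ∀ n, iIndepFun
      (fun j : ℕ => if j = 0 then I n else X j) P)
    (Y : ℕ → Ω → ℕ) (hY : ∀ n ω, Y n ω = ∑ j ∈ Finset.Icc 1 (I n ω), X j ω) :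
    ∀ f : BoundedContinuousFunction ℝ ℝ,
      Tendsto (fun n : ℕ => ∫ ω, f ((Y n ω : ℝ) / n) ∂P) atTop
        (nhds (∫ x in Set.Ici (0:ℝ), f x * (lam / m * Real.exp (-(lam / m) * x)))) := by
  obtain rfl : ∫ ω, (X 1 ω : ℝ) ∂P = m :=
    integral_natCast_eq_of_hasSum (hXmeas 1).aemeasurable hXlaw hm
  have hmean : 0 < ∫ ω, (X 1 ω : ℝ) ∂P :=
    zero_lt_one.trans_le (hφsum ▸ tsum_le_of_hasSum_natCast_mul hφnn hφ0 hm)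
  have hXindep : iIndepFun (fun j ω ↦ (X (j + 1) ω : ℝ)) P :=
    ((hindep 0).precomp Nat.succ_injective).comp (fun _ ↦ Nat.cast) fun _ ↦ by fun_prop
  have hIX (n : ℕ) : IndepFun (I n) (fun ω j ↦ (X (j + 1) ω : ℝ)) P :=
    (indepFun_of_iIndepFun_ite (hImeas n) hXmeas (hindep n)).comp
      (ψ := fun (x : ℕ → ℕ) j ↦ (x j : ℝ)) measurable_id (by fun_prop)
  have hident (j : ℕ) : IdentDistrib (fun ω ↦ (X (j + 1) ω : ℝ)) (fun ω ↦ (X 1 ω : ℝ)) P P :=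
    IdentDistrib.comp ⟨(hXmeas _).aemeasurable, (hXmeas _).aemeasurable, hXid _ (by simp)⟩
      (by fun_prop)
  have := isProbabilityMeasure_expMeasure (div_pos hlam hmean)
  have hlim := geometric_sum_light_tail_limit_general tendsto_natCast_atTop_atTop hlam haconv
    hmean (fun n ↦ (hImeas n).aemeasurable) ((eventually_ge_atTop 1).mono hIlaw) hXindep hident
    hIX .id
  intro f
  simpa only [hY, sum_Icc_one_eq_sum_range, Nat.cast_sum, div_eq_inv_mul (Finset.sum _ _), id,
    integral_expMeasure (div_pos hlam hmean), smul_eq_mul, mul_comm (f _)]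
    using tendsto_integral_of_tendstoInDistribution hlim f
end

section
/- (Corollary in the light-tail case.) Let φ : ℕ → ℝ with φ_i ≥ 0, φ_0 = 0, ∑_{i=1}^∞ φ_i = 1, and assume m := ∑_{i=1}^∞ i φ_i < ∞. Let (a_n)_{n≥1} satisfy 0 < a_n < 1 and n(1−a_n) → λ for some λ > 0, and write ψ^n := ψ^{a_n}. Then sup_{x ∈ [0,1]} | ∑_{i=0}^{⌊nx⌋} ψ^n_i (1−a_n) − (1 − e^{−(λ/m)x}) | → 0 as n → ∞. -/
open MeasureTheory ProbabilityTheory Filter Set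

/-!
`psiSeq a φ` is the renewal sequence of the step law `φ`, discounted by `a`: the partial sum of
`psiSeq a φ i * (1 - a)` over `i < n` is the probability `F n` that a geometric sum of independent
steps with law `φ` is below `n`. Summing the renewal equation twice gives the exact identity
`(1 - a) ∑_{1 ≤ k ≤ n} F k + a ∑_{k < n} T k F (n - k) = (1 - a) n`, where `T` is the tail of `φ`.
Since `∑ T = m` and the increments of `F` are `O(1 - a)`, the second sum equals `a m F n` up to an
error `ε(a) → 0` that is uniform in `n`. Hence, with `c = (1 - a) / (a m)`, the sequence `F` solves
`F n + c ∑_{1 ≤ k ≤ n} F k = c n` up to `O(ε(a))`. The exact solution is `1 - (1 + c)⁻ⁿ`, and a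
discrete Gronwall estimate bounds the distance to it by `O(ε(a))`. Finally `(1 + c)⁻ⁿ` becomes an
exponential in the scaling `n (1 - a) → λ`.
-/

section ConvolutionPowers

variable {φ : ℕ → ℝ} {a : ℝ}

lemma convPow_nonneg (hφ : ∀ i, 0 ≤ φ i) (l i : ℕ) : 0 ≤ convPow φ l i := by
  induction l generalizing i with
  | zero => unfold convPow; positivity
  | succ l ih => exact Finset.sum_nonneg fun j _ ↦ mul_nonneg (ih j) (hφ _)

lemma convPow_le_one (hφ : ∀ i, 0 ≤ φ i) (hsum : ∀ n, ∑ i ∈ Finset.range n, φ i ≤ 1) (l i : ℕ) :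
    convPow φ l i ≤ 1 := by
  induction l generalizing i with
  | zero => unfold convPow; split_ifs <;> norm_num
  | succ l ih =>
    calc convPow φ (l + 1) i
        ≤ ∑ j ∈ Finset.range (i + 1), φ (i - j) :=
          Finset.sum_le_sum fun j _ ↦ mul_le_of_le_one_left (hφ _) (ih j)
      _ = ∑ j ∈ Finset.range (i + 1), φ j := Finset.sum_flip φ
      _ ≤ 1 := hsum _

lemma summable_pow_mul_convPow (hφ : ∀ i, 0 ≤ φ i) (hsum : ∀ n, ∑ i ∈ Finset.range n, φ i ≤ 1)
    (ha : |a| < 1) (i : ℕ) : Summable fun l ↦ a ^ l * convPow φ l i := by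
  refine .of_norm_bounded (summable_geometric_of_abs_lt_one (abs_abs a ▸ ha)) fun l ↦ ?_
  rw [norm_mul, norm_pow, Real.norm_eq_abs, Real.norm_of_nonneg (convPow_nonneg hφ l i)]
  exact mul_le_of_le_one_right (by positivity) (convPow_le_one hφ hsum l i)

lemma psiSeq_nonneg (hφ : ∀ i, 0 ≤ φ i) (ha : 0 ≤ a) (i : ℕ) : 0 ≤ psiSeq a φ i :=
  tsum_nonneg fun l ↦ mul_nonneg (pow_nonneg ha l) (convPow_nonneg hφ l i)

end ConvolutionPowers

section Renewal

variable {R : Type*} [CommRing R]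

/-- The renewal equation `u = δ₀ + a (u * φ)` with step weights `φ`, each step being discounted by
the factor `a`. -/
def IsDiscountedRenewal (a : R) (φ u : ℕ → R) : Prop :=
  ∀ n, u n = (if n = 0 then 1 else 0) + a * ∑ j ∈ Finset.range (n + 1), u j * φ (n - j)

/-- The tail `P(X > k)` of an `ℕ`-valued random variable `X` with law `φ`, written as
`1 - P(X ≤ k)`. -/
def tailProb (φ : ℕ → R) (k : ℕ) : R :=
  1 - ∑ i ∈ Finset.range (k + 1), φ i

/-- For `u = psiSeq a φ`, the probability `P(S < n)`, where `S` is the sum of a geometric number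
(with success probability `1 - a`) of independent steps with law `φ`. The inequality is strict so
that the value at `0` is `0`, which makes `n - k` harmless for `k > n`. -/
def renewalCDF (a : R) (u : ℕ → R) (n : ℕ) : R :=
  ∑ i ∈ Finset.range n, u i * (1 - a)

lemma isDiscountedRenewal_psiSeq {φ : ℕ → ℝ} {a : ℝ} (hφ : ∀ i, 0 ≤ φ i)
    (hsum : ∀ n, ∑ i ∈ Finset.range n, φ i ≤ 1) (ha : |a| < 1) :
    IsDiscountedRenewal a φ (psiSeq a φ) := by
  intro n
  have hs := summable_pow_mul_convPow hφ hsum ha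
  have hconv : ∑ j ∈ Finset.range (n + 1), psiSeq a φ j * φ (n - j) =
      ∑' l, a ^ l * convPow φ (l + 1) n := by
    simp only [psiSeq, convPow, ← tsum_mul_right, Finset.mul_sum, ← mul_assoc]
    exact (Summable.tsum_finsetSum fun j _ ↦ (hs j).mul_right _).symm
  rw [hconv, psiSeq, (hs n).tsum_eq_zero_add, ← tsum_mul_left]
  simp only [convPow, pow_zero, one_mul, pow_succ', mul_assoc]

namespace IsDiscountedRenewal

variable {a : R} {φ u : ℕ → R}

-- `P(S ≤ n) + P(S > n) = 1`, the second event being split by the last renewal in `[0, n]`.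
lemma renewalCDF_succ_add_eq_one (h : IsDiscountedRenewal a φ u) (n : ℕ) :
    renewalCDF a u (n + 1) + a * ∑ j ∈ Finset.range (n + 1), u j * tailProb φ (n - j) = 1 := by
  have htail : ∑ j ∈ Finset.range (n + 1), u j * tailProb φ (n - j) =
      ∑ j ∈ Finset.range (n + 1), u j -
        ∑ k ∈ Finset.range (n + 1), ∑ j ∈ Finset.range (k + 1), u j * φ (k - j) := by
    rw [Finset.sum_range_diag_flip (n + 1) fun j i ↦ u j * φ i, ← Finset.sum_sub_distrib]
    refine Finset.sum_congr rfl fun j hj ↦ ?_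
    rw [tailProb, ← Finset.mul_sum, mul_sub, mul_one,
      Nat.sub_add_comm (Finset.mem_range_succ_iff.1 hj)]
  have hsum : ∑ k ∈ Finset.range (n + 1), u k = 1 +
      a * ∑ k ∈ Finset.range (n + 1), ∑ j ∈ Finset.range (k + 1), u j * φ (k - j) := by
    rw [Finset.sum_congr rfl fun k _ ↦ h k, Finset.sum_add_distrib, Finset.mul_sum]
    simp
  rw [renewalCDF, ← Finset.sum_mul, htail]
  linear_combination hsum

lemma sum_renewalCDF_add (h : IsDiscountedRenewal a φ u) (n : ℕ) :
    (1 - a) * ∑ k ∈ Finset.range n, renewalCDF a u (k + 1) +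
      a * ∑ k ∈ Finset.range n, tailProb φ k * renewalCDF a u (n - k) = (1 - a) * n := by
  have hflip : ∑ k ∈ Finset.range n, tailProb φ k * renewalCDF a u (n - k) =
      (1 - a) * ∑ k ∈ Finset.range n, ∑ j ∈ Finset.range (k + 1), u j * tailProb φ (k - j) := by
    have hswap (k : ℕ) : ∑ j ∈ Finset.range (k + 1), u j * tailProb φ (k - j) =
        ∑ j ∈ Finset.range (k + 1), tailProb φ j * u (k - j) := by
      rw [← Finset.sum_flip]
      refine Finset.sum_congr rfl fun j hj ↦ ?_
      rw [Nat.sub_sub_self (Finset.mem_range_succ_iff.1 hj), mul_comm]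
    simp only [hswap, Finset.sum_range_diag_flip n fun j i ↦ tailProb φ j * u i, renewalCDF,
      ← Finset.sum_mul, ← Finset.mul_sum]
    rw [Finset.mul_sum]
    exact Finset.sum_congr rfl fun k _ ↦ by ring
  calc (1 - a) * ∑ k ∈ Finset.range n, renewalCDF a u (k + 1) +
        a * ∑ k ∈ Finset.range n, tailProb φ k * renewalCDF a u (n - k)
      = (1 - a) * ∑ k ∈ Finset.range n, (renewalCDF a u (k + 1) +
          a * ∑ j ∈ Finset.range (k + 1), u j * tailProb φ (k - j)) := by
        rw [hflip, Finset.sum_add_distrib, ← Finset.mul_sum]; ring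
    _ = (1 - a) * n := by simp [h.renewalCDF_succ_add_eq_one]

end IsDiscountedRenewal

end Renewal

section TailSums

lemma hasSum_sub_sum_range_succ {φ : ℕ → ℝ} {s m : ℝ} (hφ : ∀ i, 0 ≤ φ i) (hs : HasSum φ s)
    (hm : HasSum (fun i : ℕ ↦ (i : ℝ) * φ i) m) :
    HasSum (fun k ↦ s - ∑ i ∈ Finset.range (k + 1), φ i) m := by
  have hrow (i : ℕ) : HasSum (fun k ↦ if k < i then φ i else 0) (i * φ i) := by
    have h := hasSum_sum_of_ne_finset_zero (L := SummationFilter.unconditional ℕ)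
      (f := fun k ↦ if k < i then φ i else 0) (s := Finset.range i) (by simp +contextual)
    rwa [Finset.sum_congr rfl fun k hk ↦ if_pos (Finset.mem_range.1 hk), Finset.sum_const,
      Finset.card_range, nsmul_eq_mul] at h
  have hcol (k : ℕ) : HasSum (fun i ↦ if k < i then φ i else 0)
      (s - ∑ i ∈ Finset.range (k + 1), φ i) := by
    have hhead := hasSum_sum_of_ne_finset_zero (L := SummationFilter.unconditional ℕ)
      (f := fun i ↦ if i ∈ Finset.range (k + 1) then φ i else 0) (s := Finset.range (k + 1))
      (by simp +contextual)
    rw [Finset.sum_congr rfl fun i hi ↦ if_pos hi] at hhead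
    refine (hs.sub hhead).congr_fun fun i ↦ ?_
    rcases lt_or_ge k i with hi | hi <;> simp [hi, not_lt.2]
  have hprod : Summable fun p : ℕ × ℕ ↦ if p.2 < p.1 then φ p.1 else 0 :=
    (summable_prod_of_nonneg fun p ↦ by dsimp; split_ifs <;> simp [hφ]).2
      ⟨fun i ↦ (hrow i).summable, by simpa only [(hrow _).tsum_eq] using hm.summable⟩
  have htotal : HasSum (fun p : ℕ × ℕ ↦ if p.2 < p.1 then φ p.1 else 0) m :=
    (hprod.hasSum.prod_fiberwise hrow).unique hm ▸ hprod.hasSum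
  exact ((Equiv.prodComm ℕ ℕ).hasSum_iff.2 htotal).prod_fiberwise hcol

lemma tendsto_tsum_mul_min_one {T : ℕ → ℝ} (hT : Summable T) :
    Tendsto (fun δ : ℝ ↦ ∑' k : ℕ, T k * min 1 (k * δ)) (nhdsWithin 0 (Ici 0)) (nhds 0) := by
  have hterm (k : ℕ) : Tendsto (fun δ : ℝ ↦ T k * min 1 (k * δ)) (nhdsWithin 0 (Ici 0))
      (nhds 0) := by
    have : Continuous fun δ : ℝ ↦ T k * min 1 (k * δ) := by fun_prop
    simpa using (this.tendsto 0).mono_left nhdsWithin_le_nhds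
  suffices ∀ᶠ δ : ℝ in nhdsWithin 0 (Ici 0), ∀ k : ℕ, ‖T k * min 1 (k * δ)‖ ≤ ‖T k‖ by
    simpa using tendsto_tsum_of_dominated_convergence hT.norm hterm this
  filter_upwards [self_mem_nhdsWithin] with δ hδ k
  have hδ : 0 ≤ (k : ℝ) * δ := mul_nonneg k.cast_nonneg hδ
  rw [norm_mul, Real.norm_of_nonneg (le_min zero_le_one hδ)]
  exact mul_le_of_le_one_right (norm_nonneg _) (min_le_left _ _)

lemma abs_mul_sub_sum_mul_le {T F : ℕ → ℝ} {m δ : ℝ} (hT : ∀ k, 0 ≤ T k) (hm : HasSum T m)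
    (hF0 : F 0 = 0) (hmono : Monotone F) (hF1 : ∀ n, F n ≤ 1) (hstep : ∀ n, F (n + 1) ≤ F n + δ)
    (n : ℕ) :
    |m * F n - ∑ k ∈ Finset.range n, T k * F (n - k)| ≤ ∑' k : ℕ, T k * min 1 (k * δ) := by
  have hF_nonneg (n : ℕ) : 0 ≤ F n := hF0 ▸ hmono n.zero_le
  have hδ : 0 ≤ δ := by linarith [hstep 0, hF_nonneg 1]
  have hlip (k : ℕ) : F n - F (n - k) ≤ k * δ := by
    induction k with
    | zero => simp
    | succ k ih =>
      have : F (n - k) ≤ F (n - (k + 1)) + δ :=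
        (hmono (by lia)).trans (hstep _)
      push_cast
      linarith
  have hterm (k : ℕ) : T k * F n - T k * F (n - k) ≤ T k * min 1 (k * δ) := by
    rw [← mul_sub]
    exact mul_le_mul_of_nonneg_left
      (le_min (by linarith [hF1 n, hF_nonneg (n - k)]) (hlip k)) (hT k)
  have hsum : HasSum (fun k ↦ T k * F n - T k * F (n - k))
      (m * F n - ∑ k ∈ Finset.range n, T k * F (n - k)) := by
    refine (hm.mul_right _).sub (hasSum_sum_of_ne_finset_zero fun k hk ↦ ?_)
    rw [Nat.sub_eq_zero_of_le (by simpa using hk), hF0, mul_zero]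
  have hbound : Summable fun k : ℕ ↦ T k * min 1 (k * δ) :=
    .of_nonneg_of_le (fun k ↦ mul_nonneg (hT k) (by positivity))
      (fun k ↦ mul_le_of_le_one_right (hT k) (min_le_left _ _)) hm.summable
  rw [abs_of_nonneg <| hsum.nonneg fun k ↦
    sub_nonneg.2 (mul_le_mul_of_nonneg_left (hmono (n.sub_le k)) (hT k))]
  exact hasSum_le hterm hsum hbound.hasSum

end TailSums

section DiscreteGronwall

lemma norm_le_two_mul_of_norm_add_smul_sum_le {E : Type*} [SeminormedAddCommGroup E]
    [NormedSpace ℝ E] {D : ℕ → E} {c e : ℝ} (hc : 0 ≤ c)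
    (hD : ∀ n, ‖D n + c • ∑ k ∈ Finset.range n, D (k + 1)‖ ≤ e) (n : ℕ) : ‖D n‖ ≤ 2 * e := by
  set S : ℕ → E := fun n ↦ ∑ k ∈ Finset.range n, D (k + 1) with hS_def
  have he : 0 ≤ e := (norm_nonneg _).trans (hD 0)
  have hS (n : ℕ) : c * ‖S n‖ ≤ e := by
    induction n with
    | zero => simpa [hS_def] using he
    | succ n ih =>
      have hrec : (1 + c) • S (n + 1) = S n + (D (n + 1) + c • S (n + 1)) := by
        simp only [hS_def, Finset.sum_range_succ]
        module
      have hle : (1 + c) * ‖S (n + 1)‖ ≤ ‖S n‖ + e := by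
        rw [← Real.norm_of_nonneg (by linarith : 0 ≤ 1 + c), ← norm_smul, hrec]
        exact norm_add_le_of_le le_rfl (hD (n + 1))
      nlinarith
  calc ‖D n‖ = ‖(D n + c • S n) - c • S n‖ := by rw [add_sub_cancel_right]
    _ ≤ e + e := norm_sub_le_of_le (hD n) (by rw [norm_smul, Real.norm_of_nonneg hc]; exact hS n)
    _ = 2 * e := by ring

lemma one_sub_inv_pow_add_mul_sum {K : Type*} [Field K] {c : K} (hc : 1 + c ≠ 0) (n : ℕ) :
    (1 - (1 + c)⁻¹ ^ n) + c * ∑ k ∈ Finset.range n, (1 - (1 + c)⁻¹ ^ (k + 1)) = c * n := by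
  induction n with
  | zero => simp
  | succ n ih =>
    have hinv : (1 + c)⁻¹ * (1 + c) = 1 := inv_mul_cancel₀ hc
    rw [Finset.sum_range_succ]
    push_cast
    linear_combination ih - (1 + c)⁻¹ ^ n * hinv

lemma abs_sub_one_sub_inv_pow_le {F : ℕ → ℝ} {c e : ℝ} (hc : 0 ≤ c)
    (hF : ∀ n : ℕ, |F n + c * ∑ k ∈ Finset.range n, F (k + 1) - c * n| ≤ e) (n : ℕ) :
    |F n - (1 - (1 + c)⁻¹ ^ n)| ≤ 2 * e := by
  refine norm_le_two_mul_of_norm_add_smul_sum_le (D := fun n ↦ F n - (1 - (1 + c)⁻¹ ^ n)) hc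
    (fun n ↦ ?_) n
  rw [smul_eq_mul, Finset.sum_sub_distrib, Real.norm_eq_abs]
  convert hF n using 2
  rw [← one_sub_inv_pow_add_mul_sum (by positivity) n]
  ring

end DiscreteGronwall

section GeometricSums

variable {φ u : ℕ → ℝ} {a m : ℝ}

lemma tailProb_nonneg (hφ : ∀ i, 0 ≤ φ i) (hsum : HasSum φ 1) (k : ℕ) : 0 ≤ tailProb φ k :=
  sub_nonneg.2 (sum_le_hasSum _ (fun i _ ↦ hφ i) hsum)

lemma tailProb_zero_pos (hφ : ∀ i, 0 ≤ φ i) (hsum : HasSum φ 1) (hφ0 : φ 0 ≠ 1) :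
    0 < tailProb φ 0 :=
  (tailProb_nonneg hφ hsum 0).lt_of_ne' (by simpa [tailProb, sub_eq_zero] using hφ0.symm)

lemma renewalCDF_monotone (hu : ∀ i, 0 ≤ u i) (ha : a ≤ 1) : Monotone (renewalCDF a u) :=
  monotone_nat_of_le_succ fun n ↦ by
    rw [renewalCDF, renewalCDF, Finset.sum_range_succ]
    exact le_add_of_nonneg_right (mul_nonneg (hu n) (sub_nonneg.2 ha))

namespace IsDiscountedRenewal

lemma renewalCDF_le_one (h : IsDiscountedRenewal a φ u) (hu : ∀ i, 0 ≤ u i)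
    (hT : ∀ k, 0 ≤ tailProb φ k) (ha : 0 ≤ a) (n : ℕ) : renewalCDF a u n ≤ 1 := by
  cases n with
  | zero => simp [renewalCDF]
  | succ n =>
    rw [← h.renewalCDF_succ_add_eq_one n]
    exact le_add_of_nonneg_right <| mul_nonneg ha <|
      Finset.sum_nonneg fun j _ ↦ mul_nonneg (hu j) (hT _)

lemma renewalCDF_succ_le (h : IsDiscountedRenewal a φ u) (hu : ∀ i, 0 ≤ u i)
    (hT : ∀ k, 0 ≤ tailProb φ k) (hT0 : 0 < tailProb φ 0) (ha : a ∈ Ioo 0 1) (n : ℕ) :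
    renewalCDF a u (n + 1) ≤ renewalCDF a u n + (1 - a) / (a * tailProb φ 0) := by
  have hlast : u n * tailProb φ 0 ≤ ∑ j ∈ Finset.range (n + 1), u j * tailProb φ (n - j) := by
    simpa using Finset.single_le_sum (f := fun j ↦ u j * tailProb φ (n - j))
      (fun j _ ↦ mul_nonneg (hu j) (hT _)) (Finset.self_mem_range_succ n)
  have hCDF : 0 ≤ renewalCDF a u (n + 1) :=
    Finset.sum_nonneg fun i _ ↦ mul_nonneg (hu i) (sub_nonneg.2 ha.2.le)
  have hun : u n ≤ 1 / (a * tailProb φ 0) := by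
    rw [le_div_iff₀ (mul_pos ha.1 hT0)]
    calc u n * (a * tailProb φ 0) = a * (u n * tailProb φ 0) := by ring
      _ ≤ a * ∑ j ∈ Finset.range (n + 1), u j * tailProb φ (n - j) := by gcongr; exact ha.1.le
      _ ≤ 1 := by linarith [h.renewalCDF_succ_add_eq_one n]
  rw [renewalCDF, Finset.sum_range_succ, ← renewalCDF, div_eq_mul_one_div, mul_comm (1 - a)]
  gcongr
  exact sub_nonneg.2 ha.2.le

lemma abs_renewalCDF_sub_le (h : IsDiscountedRenewal a φ u) (hu : ∀ i, 0 ≤ u i)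
    (hT : ∀ k, 0 ≤ tailProb φ k) (hT0 : 0 < tailProb φ 0) (hm : HasSum (tailProb φ) m)
    (ha : a ∈ Ioo 0 1) (n : ℕ) :
    |renewalCDF a u n - (1 - (1 + (1 - a) / (a * m))⁻¹ ^ n)| ≤
      2 * ((∑' k : ℕ, tailProb φ k * min 1 (k * ((1 - a) / (a * tailProb φ 0)))) / m) := by
  have hm0 : 0 < m := hT0.trans_le (le_hasSum hm 0 fun k _ ↦ hT k)
  have ha0 := ha.1
  have ha1 : 0 ≤ 1 - a := sub_nonneg.2 ha.2.le
  refine abs_sub_one_sub_inv_pow_le (by positivity) (fun n ↦ ?_) n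
  have hdefect : renewalCDF a u n + (1 - a) / (a * m) *
        ∑ k ∈ Finset.range n, renewalCDF a u (k + 1) - (1 - a) / (a * m) * n =
      (m * renewalCDF a u n -
        ∑ k ∈ Finset.range n, tailProb φ k * renewalCDF a u (n - k)) / m := by
    field_simp
    linear_combination h.sum_renewalCDF_add n
  rw [hdefect, abs_div, abs_of_pos hm0]
  gcongr
  exact abs_mul_sub_sum_mul_le hT hm (by simp [renewalCDF]) (renewalCDF_monotone hu ha.2.le)
    (h.renewalCDF_le_one hu hT ha0.le) (h.renewalCDF_succ_le hu hT hT0 ha) n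

end IsDiscountedRenewal

lemma tendstoUniformly_renewalCDF_psiSeq (hφ : ∀ i, 0 ≤ φ i) (hφ0 : φ 0 ≠ 1) (hsum : HasSum φ 1)
    (hm : HasSum (fun i : ℕ ↦ (i : ℝ) * φ i) m) :
    TendstoUniformly (fun a n ↦ renewalCDF a (psiSeq a φ) n - (1 - (1 + (1 - a) / (a * m))⁻¹ ^ n))
      0 (nhdsWithin 1 (Iio 1)) := by
  have hT := tailProb_nonneg hφ hsum
  have hT0 := tailProb_zero_pos hφ hsum hφ0
  have hTm : HasSum (tailProb φ) m := hasSum_sub_sum_range_succ hφ hsum hm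
  have hIoo : ∀ᶠ a : ℝ in nhdsWithin 1 (Iio 1), a ∈ Ioo 0 1 := Ioo_mem_nhdsLT zero_lt_one
  have hδ : Tendsto (fun a : ℝ ↦ (1 - a) / (a * tailProb φ 0)) (nhdsWithin 1 (Iio 1))
      (nhdsWithin 0 (Ici 0)) := by
    refine tendsto_nhdsWithin_iff.2 ⟨?_, hIoo.mono fun a ha ↦ ?_⟩
    · have : ContinuousAt (fun a : ℝ ↦ (1 - a) / (a * tailProb φ 0)) 1 := by
        fun_prop (disch := simpa using hT0.ne')
      simpa using this.tendsto.mono_left nhdsWithin_le_nhds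
    · exact div_nonneg (sub_nonneg.2 ha.2.le) (mul_pos ha.1 hT0).le
  have hbound := (((tendsto_tsum_mul_min_one hTm.summable).comp hδ).div_const m).const_mul 2
  rw [zero_div, mul_zero] at hbound
  refine Metric.tendstoUniformly_iff.2 fun ε hε ↦ ?_
  filter_upwards [hIoo, hbound.eventually_lt_const hε] with a ha hlt n
  have hu := isDiscountedRenewal_psiSeq hφ (fun n ↦ sum_le_hasSum _ (fun i _ ↦ hφ i) hsum)
    (abs_lt.2 ⟨by linarith [ha.1], ha.2⟩)
  rw [Pi.zero_apply, dist_zero_left]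
  exact (hu.abs_renewalCDF_sub_le (psiSeq_nonneg hφ ha.1.le) hT hT0 hTm ha n).trans_lt hlt

end GeometricSums

section ExponentialLimit

lemma abs_rpow_sub_self_le {x p : ℝ} (hx : x ∈ Icc 0 1) (hp : 0 ≤ p) : |x ^ p - x| ≤ |p - 1| := by
  have hx' : -1 ≤ x - 1 := by linarith [hx.1]
  rcases le_total p 1 with hp1 | hp1
  · have hbern := rpow_one_add_le_one_add_mul_self hx' hp hp1
    rw [add_sub_cancel] at hbern
    rw [abs_of_nonneg (sub_nonneg.2 (Real.self_le_rpow_of_le_one hx.1 hx.2 hp1)),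
      abs_of_nonpos (sub_nonpos.2 hp1)]
    nlinarith [hx.1]
  · have hbern := one_add_mul_self_le_rpow_one_add hx' hp1
    rw [add_sub_cancel] at hbern
    rw [abs_of_nonpos (sub_nonpos.2 (Real.rpow_le_self_of_le_one hx.1 hx.2 hp1)),
      abs_of_nonneg (sub_nonneg.2 hp1)]
    nlinarith [hx.1]

lemma abs_exp_neg_mul_sub_exp_neg_mul_le {s t x : ℝ} (hs : 0 ≤ s) (ht : 0 < t) (hx : 0 ≤ x) :
    |Real.exp (-(s * x)) - Real.exp (-(t * x))| ≤ |s - t| / t := by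
  have hpow : Real.exp (-(s * x)) = Real.exp (-(t * x)) ^ (s / t) := by
    rw [← Real.exp_mul]
    field_simp
  have hbase : Real.exp (-(t * x)) ∈ Icc 0 1 :=
    ⟨Real.exp_nonneg _, Real.exp_le_one_iff.2 (neg_nonpos.2 (by positivity))⟩
  calc |Real.exp (-(s * x)) - Real.exp (-(t * x))|
      ≤ |s / t - 1| := hpow ▸ abs_rpow_sub_self_le hbase (by positivity)
    _ = |s - t| / t := by rw [div_sub_one ht.ne', abs_div, abs_of_pos ht]

lemma abs_exp_neg_mul_floor_add_one_sub_le {L y : ℝ} (hL : 0 ≤ L) (hy : 0 ≤ y) :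
    |Real.exp (-(L * (⌊y⌋₊ + 1))) - Real.exp (-(L * y))| ≤ L := by
  have hfloor := Nat.floor_le hy
  have hle : L * y ≤ L * (⌊y⌋₊ + 1) := by gcongr; exact (Nat.lt_floor_add_one y).le
  have hsplit : Real.exp (-(L * (⌊y⌋₊ + 1))) =
      Real.exp (-(L * y)) * Real.exp (-(L * (⌊y⌋₊ + 1 - y))) := by
    rw [← Real.exp_add]; ring_nf
  have hexp : 1 - Real.exp (-(L * (⌊y⌋₊ + 1 - y))) ≤ L := by
    nlinarith [Real.add_one_le_exp (-(L * (⌊y⌋₊ + 1 - y)))]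
  have hone : Real.exp (-(L * y)) ≤ 1 := Real.exp_le_one_iff.2 (neg_nonpos.2 (by positivity))
  rw [abs_sub_comm, abs_of_nonneg (sub_nonneg.2 (Real.exp_le_exp.2 (neg_le_neg hle))), hsplit]
  nlinarith [Real.exp_nonneg (-(L * y))]

lemma tendstoUniformlyOn_inv_one_add_pow_floor {c : ℕ → ℝ} {μ : ℝ} (hμ : 0 < μ)
    (hlim : Tendsto (fun n : ℕ ↦ n * c n) atTop (nhds μ)) :
    TendstoUniformlyOn (fun (n : ℕ) (x : ℝ) ↦ (1 + c n)⁻¹ ^ (⌊n * x⌋₊ + 1))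
      (fun x ↦ Real.exp (-(μ * x))) atTop (Ici 0) := by
  set L : ℕ → ℝ := fun n ↦ Real.log (1 + c n)
  have hnL : Tendsto (fun n : ℕ ↦ n * L n) atTop (nhds μ) :=
    Real.tendsto_nat_mul_log_one_add_of_tendsto hlim
  have hbound : Tendsto (fun n : ℕ ↦ L n + |n * L n - μ| / μ) atTop (nhds 0) := by
    simpa using (tendsto_zero_of_tendsto_mul_atTop hnL).add ((hnL.sub_const μ).abs.div_const μ)
  refine Metric.tendstoUniformlyOn_iff.2 fun ε hε ↦ ?_
  filter_upwards [hlim.eventually_const_lt hμ, hbound.eventually_lt_const hε] with n hn hlt x hx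
  have hcn : 0 < c n := pos_of_mul_pos_right hn n.cast_nonneg
  rw [mem_Ici] at hx
  have hL : 0 ≤ L n := Real.log_nonneg (by linarith)
  have hpow : (1 + c n)⁻¹ ^ (⌊n * x⌋₊ + 1) = Real.exp (-(L n * (⌊n * x⌋₊ + 1))) := by
    have hbase : (1 + c n)⁻¹ = Real.exp (-L n) := by
      rw [Real.exp_neg, Real.exp_log (by linarith)]
    rw [hbase, ← Real.exp_nat_mul]
    push_cast
    ring_nf
  calc dist (Real.exp (-(μ * x))) ((1 + c n)⁻¹ ^ (⌊n * x⌋₊ + 1))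
      = |Real.exp (-(L n * (⌊n * x⌋₊ + 1))) - Real.exp (-(μ * x))| := by
        rw [hpow, dist_comm, Real.dist_eq]
    _ ≤ |Real.exp (-(L n * (⌊n * x⌋₊ + 1))) - Real.exp (-(L n * (n * x)))| +
        |Real.exp (-(n * L n * x)) - Real.exp (-(μ * x))| := by
        rw [show n * L n * x = L n * (n * x) by ring]
        exact abs_sub_le _ _ _
    _ ≤ L n + |n * L n - μ| / μ :=
        add_le_add (abs_exp_neg_mul_floor_add_one_sub_le hL (by positivity))
          (abs_exp_neg_mul_sub_exp_neg_mul_le (by positivity) hμ hx)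
    _ < ε := hlt

end ExponentialLimit

lemma tendsto_iSup_abs_sub {ι α : Type*} {p : Filter ι} {F : ι → α → ℝ} {f : α → ℝ} {s : Set α}
    (h : TendstoUniformlyOn F f p s) :
    Tendsto (fun i ↦ ⨆ x : s, |F i x - f x|) p (nhds 0) := by
  refine Metric.tendsto_nhds.2 fun ε hε ↦ ?_
  filter_upwards [Metric.tendstoUniformlyOn_iff.1 h (ε / 2) (half_pos hε)] with i hi
  rw [Real.dist_0_eq_abs, abs_of_nonneg (Real.iSup_nonneg fun _ ↦ abs_nonneg _)]
  refine (Real.iSup_le (fun x ↦ ?_) (half_pos hε).le).trans_lt (half_lt_self hε)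
  rw [abs_sub_comm]
  exact (hi x x.2).le

theorem psi_partial_sum_unif_conv_light_tail_general
    (φ : ℕ → ℝ) (hφnn : ∀ i, 0 ≤ φ i) (hφ0 : φ 0 ≠ 1) (hφsum : ∑' i : ℕ, φ i = 1)
    (m : ℝ) (hm : HasSum (fun i : ℕ ↦ (i : ℝ) * φ i) m)
    (a : ℕ → ℝ) (lam : ℝ) (hlam : 0 < lam)
    (haconv : Tendsto (fun n : ℕ ↦ (n : ℝ) * (1 - a n)) atTop (nhds lam)) :
    TendstoUniformlyOn
      (fun (n : ℕ) (x : ℝ) ↦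
        ∑ i ∈ Finset.range (⌊(n : ℝ) * x⌋₊ + 1), psiSeq (a n) φ i * (1 - a n))
      (fun x ↦ 1 - Real.exp (-(lam / m) * x)) atTop (Ici 0) := by
  have hsum : HasSum φ 1 := by
    rw [← hφsum]
    refine Summable.hasSum (not_not.1 fun h ↦ zero_ne_one' ℝ ?_)
    rw [← hφsum, tsum_eq_zero_of_not_summable h]
  have hm0 : 0 < m := (tailProb_zero_pos hφnn hsum hφ0).trans_le <|
    le_hasSum (hasSum_sub_sum_range_succ hφnn hsum hm) 0 fun k _ ↦ tailProb_nonneg hφnn hsum k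
  have ha1 : Tendsto a atTop (nhds 1) := by
    simpa using (tendsto_zero_of_tendsto_mul_atTop haconv).const_sub 1
  have ha_lt : ∀ᶠ n in atTop, a n < 1 := (haconv.eventually_const_lt hlam).mono fun n hn ↦
    sub_pos.1 (pos_of_mul_pos_right hn n.cast_nonneg)
  have hCDF : TendstoUniformlyOn (fun (n : ℕ) (x : ℝ) ↦
      renewalCDF (a n) (psiSeq (a n) φ) (⌊n * x⌋₊ + 1) -
        (1 - (1 + (1 - a n) / (a n * m))⁻¹ ^ (⌊n * x⌋₊ + 1))) 0 atTop (Ici 0) := fun s hs ↦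
    ((tendsto_nhdsWithin_iff.2 ⟨ha1, ha_lt⟩).eventually
      (tendstoUniformly_renewalCDF_psiSeq hφnn hφ0 hsum hm s hs)).mono fun n h x _ ↦ h _
  have hexp := tendstoUniformlyOn_inv_one_add_pow_floor (c := fun n ↦ (1 - a n) / (a n * m))
    (div_pos hlam hm0)
    (by simpa [Pi.div_def, mul_div_assoc] using
      haconv.div (ha1.mul_const m) (by simpa using hm0.ne'))
  have hone := (tendsto_const_nhds (α := ℕ) (x := (1 : ℝ)) (f := atTop)).tendstoUniformlyOn_const
    (Ici (0 : ℝ))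
  refine ((hCDF.add (hone.sub hexp)).congr ?_).congr_right ?_
  · exact .of_forall fun n x _ ↦ by simp [renewalCDF]
  · intro x _
    simp

/-- light-tail corollary:
`sup_{x∈[0,1]} |∑_{i=0}^{⌊nx⌋} ψ^n_i (1-a_n) − (1 − e^{−(λ/m)x})| → 0`. -/
theorem psi_partial_sum_unif_conv_light_tail
    (φ : ℕ → ℝ) (hφnn : ∀ i, 0 ≤ φ i) (hφ0 : φ 0 = 0) (hφsum : ∑' i : ℕ, φ i = 1)
    (m : ℝ) (hm : HasSum (fun i : ℕ => (i : ℝ) * φ i) m)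
    (a : ℕ → ℝ) (ha : ∀ n, 1 ≤ n → 0 < a n ∧ a n < 1)
    (lam : ℝ) (hlam : 0 < lam)
    (haconv : Tendsto (fun n : ℕ => (n : ℝ) * (1 - a n)) atTop (nhds lam)) :
    Tendsto
      (fun n : ℕ => ⨆ x : Set.Icc (0:ℝ) 1,
        |(∑ i ∈ Finset.range (⌊(n : ℝ) * (x : ℝ)⌋₊ + 1), psiSeq (a n) φ i * (1 - a n)) -
          (1 - Real.exp (-(lam / m) * (x : ℝ)))|)
      atTop (nhds 0) :=
  (tendsto_iSup_abs_sub (s := Icc 0 1) <| (psi_partial_sum_unif_conv_light_tail_general φ hφnn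
    (by simp [hφ0]) hφsum m hm a lam hlam haconv).mono
      Icc_subset_Ici_self :)
end

section
/- (Covariance formula for the AR process.) Let φ : ℕ → ℝ with φ_i ≥ 0, φ_0 = 0, ∑_{i=1}^∞ φ_i = 1, let a ∈ (0,1), and let (ε_k)_{k≥0} be independent real random variables with E[ε_k] = 0 and E[ε_k^2] = 1 for all k. Define y_0 = ε_0 and y_k = ε_k + ∑_{i=1}^k a φ_i y_{k−i} for k ≥ 1. Then for all k ≥ k' ≥ 0, E[y_k y_{k'}] = ∑_{j=0}^{k'} ψ^a_{k−j} ψ^a_{k'−j}. -/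
open MeasureTheory ProbabilityTheory Filter Set

/-!
In generating functions, with `Φ(X) = ∑ φ_i X^i`, the sequence `ψ^a` is the geometric series
`Ψ = ∑ (a Φ)^l = (1 - a Φ)⁻¹`, while the recursion for `y` reads `(1 - a Φ) Y = E`. Hence `Y = Ψ E`,
that is `y_k = ∑_{j ≤ k} ψ^a_{k-j} ε_j`, and the covariance is read off from the orthonormality
of the `ε_j` in `L²`.
-/

section GeneratingFunction

open PowerSeries
open scoped PowerSeries.WithPiTopology

theorem mk_convPow (φ : ℕ → ℝ) (l : ℕ) : mk (convPow φ l) = mk φ ^ l := by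
  induction l with
  | zero => ext i; simp only [coeff_mk, convPow, pow_zero, coeff_one]
  | succ l ih =>
    ext k
    rw [pow_succ, ← ih, coeff_mul, Finset.Nat.sum_antidiagonal_eq_sum_range_succ_mk]
    simp only [coeff_mk, convPow]

theorem constantCoeff_smul_mk_eq_zero {R : Type*} [Semiring R] {φ : ℕ → R} (hφ0 : φ 0 = 0) (a : R) :
    constantCoeff (a • mk φ) = 0 := by
  rw [← coeff_zero_eq_constantCoeff_apply, coeff_smul, coeff_mk, hφ0, smul_zero]

theorem mk_psiSeq {φ : ℕ → ℝ} (hφ0 : φ 0 = 0) (a : ℝ) :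
    mk (psiSeq a φ) = ∑' l : ℕ, (a • mk φ) ^ l := by
  have hsum : Summable fun l : ℕ ↦ (a • mk φ) ^ l :=
    WithPiTopology.summable_pow_of_constantCoeff_eq_zero (constantCoeff_smul_mk_eq_zero hφ0 a)
  ext n
  rw [hsum.map_tsum (coeff n) (WithPiTopology.continuous_coeff ℝ n), coeff_mk, psiSeq]
  refine tsum_congr fun l ↦ ?_
  rw [smul_pow, ← mk_convPow, coeff_smul, coeff_mk, smul_eq_mul]

theorem mk_psiSeq_mul_one_sub {φ : ℕ → ℝ} (hφ0 : φ 0 = 0) (a : ℝ) :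
    mk (psiSeq a φ) * (1 - a • mk φ) = 1 := by
  rw [mk_psiSeq hφ0]
  exact WithPiTopology.tsum_pow_mul_one_sub_of_constantCoeff_eq_zero
    (constantCoeff_smul_mk_eq_zero hφ0 a)

theorem one_sub_mul_mk_of_recursion {R : Type*} [Ring R] {φ : ℕ → R} (hφ0 : φ 0 = 0) {a : R}
    {e y : ℕ → R} (hy : ∀ k, y k = e k + ∑ i ∈ Finset.Icc 1 k, a * φ i * y (k - i)) :
    (1 - a • mk φ) * mk y = mk e := by
  rw [sub_mul, one_mul, sub_eq_iff_eq_add]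
  ext k
  rw [map_add, coeff_mul, Finset.Nat.sum_antidiagonal_eq_sum_range_succ_mk, Finset.range_eq_Ico,
    Finset.sum_eq_sum_Ico_succ_bot k.succ_pos, zero_add, Nat.succ_eq_add_one,
    Finset.Ico_add_one_right_eq_Icc]
  simpa only [coeff_smul, coeff_mk, smul_eq_mul, hφ0, mul_zero, zero_mul, zero_add] using hy k

theorem eq_sum_psiSeq_mul_of_recursion {φ : ℕ → ℝ} (hφ0 : φ 0 = 0) {a : ℝ} {e y : ℕ → ℝ}
    (hy : ∀ k, y k = e k + ∑ i ∈ Finset.Icc 1 k, a * φ i * y (k - i)) (k : ℕ) :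
    y k = ∑ j ∈ Finset.range (k + 1), psiSeq a φ (k - j) * e j := by
  have hY : mk y = mk e * mk (psiSeq a φ) := by
    rw [← one_sub_mul_mk_of_recursion hφ0 hy, mul_comm, ← mul_assoc, mk_psiSeq_mul_one_sub hφ0,
      one_mul]
  have hcoeff := congrArg (coeff k) hY
  rw [coeff_mul, Finset.Nat.sum_antidiagonal_eq_sum_range_succ_mk] at hcoeff
  simpa only [coeff_mk, mul_comm] using hcoeff

end GeneratingFunction

section Orthogonality

variable {Ω ι : Type*} [MeasurableSpace Ω] {μ : Measure Ω} {X : ι → Ω → ℝ}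

theorem integral_sum_mul_sum_of_pairwise_orthogonal [DecidableEq ι]
    (hX : ∀ i, MemLp (X i) 2 μ) (horth : Pairwise fun i j ↦ ∫ ω, X i ω * X j ω ∂μ = 0)
    (s t : Finset ι) (c d : ι → ℝ) :
    ∫ ω, (∑ i ∈ s, c i * X i ω) * (∑ j ∈ t, d j * X j ω) ∂μ =
      ∑ i ∈ s ∩ t, c i * d i * ∫ ω, X i ω ^ 2 ∂μ := by
  have hint : ∀ i j, Integrable (fun ω ↦ c i * X i ω * (d j * X j ω)) μ := fun i j ↦
    ((hX i).const_mul (c i)).integrable_mul ((hX j).const_mul (d j))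
  have hterm : ∀ i j, ∫ ω, c i * X i ω * (d j * X j ω) ∂μ =
      if i = j then c i * d i * ∫ ω, X i ω ^ 2 ∂μ else 0 := by
    intro i j
    simp only [fun ω ↦ mul_mul_mul_comm (c i) (X i ω) (d j) (X j ω), integral_const_mul]
    split_ifs with hij
    · subst hij
      simp only [sq]
    · rw [horth hij, mul_zero]
  calc ∫ ω, (∑ i ∈ s, c i * X i ω) * (∑ j ∈ t, d j * X j ω) ∂μ
    _ = ∑ i ∈ s, ∑ j ∈ t, ∫ ω, c i * X i ω * (d j * X j ω) ∂μ := by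
      simp only [Finset.sum_mul_sum]
      rw [integral_finsetSum _ fun i _ ↦ integrable_finsetSum _ fun j _ ↦ hint i j]
      exact Finset.sum_congr rfl fun i _ ↦ integral_finsetSum _ fun j _ ↦ hint i j
    _ = ∑ i ∈ s ∩ t, c i * d i * ∫ ω, X i ω ^ 2 ∂μ := by
      simp only [hterm, Finset.sum_ite_eq, Finset.sum_ite_mem]

theorem pairwise_orthogonal_of_iIndepFun_of_integral_eq_zero (hindep : iIndepFun X μ)
    (hX : ∀ i, AEStronglyMeasurable (X i) μ) (hmean : ∀ i, ∫ ω, X i ω ∂μ = 0) :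
    Pairwise fun i j ↦ ∫ ω, X i ω * X j ω ∂μ = 0 := fun i j hij ↦
  ((hindep.indepFun hij).integral_fun_mul_eq_mul_integral (hX i) (hX j)).trans <| by
    rw [hmean i, zero_mul]

end Orthogonality

theorem ar_covariance_general {Ω : Type*} [MeasurableSpace Ω] {μ : Measure Ω}
    {φ : ℕ → ℝ} (hφ0 : φ 0 = 0) {a : ℝ} {ε : ℕ → Ω → ℝ} (hεL2 : ∀ k, MemLp (ε k) 2 μ)
    (hεorth : Pairwise fun i j ↦ ∫ ω, ε i ω * ε j ω ∂μ = 0)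
    (hεvar : ∀ k, ∫ ω, (ε k ω) ^ 2 ∂μ = 1) {y : ℕ → Ω → ℝ} (hy0 : y 0 = ε 0)
    (hyrec : ∀ k, 1 ≤ k → ∀ ω,
      y k ω = ε k ω + ∑ i ∈ Finset.Icc 1 k, a * φ i * y (k - i) ω)
    {k k' : ℕ} (hk : k' ≤ k) :
    ∫ ω, y k ω * y k' ω ∂μ =
      ∑ j ∈ Finset.range (k' + 1), psiSeq a φ (k - j) * psiSeq a φ (k' - j) := by
  have hyrec' : ∀ ω n, y n ω = ε n ω + ∑ i ∈ Finset.Icc 1 n, a * φ i * y (n - i) ω := by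
    rintro ω (_ | n)
    · simp [hy0]
    · exact hyrec (n + 1) n.succ_pos ω
  have hy : ∀ n ω, y n ω = ∑ j ∈ Finset.range (n + 1), psiSeq a φ (n - j) * ε j ω := fun n ω ↦
    eq_sum_psiSeq_mul_of_recursion hφ0 (hyrec' ω) n
  have hinter : Finset.range (k + 1) ∩ Finset.range (k' + 1) = Finset.range (k' + 1) :=
    Finset.inter_eq_right.2 (Finset.range_mono (Nat.succ_le_succ hk))
  simp only [hy, integral_sum_mul_sum_of_pairwise_orthogonal hεL2 hεorth, hεvar, mul_one, hinter]

/-- covariance formula for the AR(∞) process: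
`E[y_k y_{k'}] = ∑_{j=0}^{k'} ψ^a_{k-j} ψ^a_{k'-j}` for `k ≥ k'`. -/
theorem ar_covariance
    {Ω : Type*} [MeasurableSpace Ω] (P : Measure Ω) [IsProbabilityMeasure P]
    (φ : ℕ → ℝ) (hφnn : ∀ i, 0 ≤ φ i) (hφ0 : φ 0 = 0) (hφsum : ∑' i : ℕ, φ i = 1)
    (a : ℝ) (ha0 : 0 < a) (ha1 : a < 1)
    (ε : ℕ → Ω → ℝ) (hεmeas : ∀ k, Measurable (ε k))
    -- the `ε_k` are independent, square integrable, centered with unit variance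
    (hεindep : iIndepFun ε P)
    (hεL2 : ∀ k, MemLp (ε k) 2 P)
    (hεmean : ∀ k, ∫ ω, ε k ω ∂P = 0)
    (hεvar : ∀ k, ∫ ω, (ε k ω) ^ 2 ∂P = 1)
    (y : ℕ → Ω → ℝ)
    (hy0 : y 0 = ε 0)
    (hyrec : ∀ k, 1 ≤ k → ∀ ω,
      y k ω = ε k ω + ∑ i ∈ Finset.Icc 1 k, a * φ i * y (k - i) ω) :
    ∀ k k' : ℕ, k' ≤ k →
      ∫ ω, y k ω * y k' ω ∂P =
        ∑ j ∈ Finset.range (k' + 1), psiSeq a φ (k - j) * psiSeq a φ (k' - j) := by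
  intro k k' hk
  exact ar_covariance_general hφ0 hεL2 (pairwise_orthogonal_of_iIndepFun_of_integral_eq_zero
    hεindep (fun k ↦ (hεL2 k).aestronglyMeasurable) hεmean) hεvar hy0 hyrec hk
end

section
/- Let φ : ℕ → ℝ with φ_i ≥ 0, φ_0 = 0 and ∑_{i=1}^∞ φ_i = 1, and let φ̂(z) = ∑_{k=0}^∞ φ_k e^{−2πikz} for z ∈ ℝ be its Fourier transform. Then for every a ∈ [1/2, 1) and every z ∈ ℝ, |1 − a φ̂(z)|² ≥ (1−a)² + |1 − φ̂(z)|²/4. -/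
/-!
Since `1 - a w = (1 - a) + a (1 - w)`, and since `re w ≤ 1` says that `1` and `1 - w` form a
non-obtuse angle in the real plane `ℂ`, we get `|1 - a w|² ≥ (1 - a)² + a² |1 - w|²` for
`0 ≤ a ≤ 1`. The Fourier transform of a sequence of `ℓ¹`-norm at most one lies in the closed unit
disc, hence in this half-plane, and `a ≥ 1/2` gives `a² ≥ 1/4`.
-/

open MeasureTheory ProbabilityTheory Filter Set

section InnerProductSpace

variable {E : Type*} [SeminormedAddCommGroup E] [InnerProductSpace ℝ E]

theorem norm_sq_add_norm_sq_le_norm_add_sq_of_inner_nonneg {x y : E} (h : 0 ≤ inner ℝ x y) :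
    ‖x‖ ^ 2 + ‖y‖ ^ 2 ≤ ‖x + y‖ ^ 2 := by
  rw [norm_add_sq_real]
  linarith

theorem sq_mul_norm_sq_add_sq_mul_norm_sub_sq_le_norm_sub_smul_sq {x y : E}
    (hxy : inner ℝ x y ≤ ‖x‖ ^ 2) {a : ℝ} (ha0 : 0 ≤ a) (ha1 : a ≤ 1) :
    (1 - a) ^ 2 * ‖x‖ ^ 2 + a ^ 2 * ‖x - y‖ ^ 2 ≤ ‖x - a • y‖ ^ 2 := by
  have hsplit : x - a • y = (1 - a) • x + a • (x - y) := by module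
  have hangle : 0 ≤ inner ℝ x (x - y) := by
    rw [inner_sub_right, real_inner_self_eq_norm_sq]
    exact sub_nonneg.mpr hxy
  have hinner : 0 ≤ inner ℝ ((1 - a) • x) (a • (x - y)) := by
    rw [real_inner_smul_left, real_inner_smul_right]
    exact mul_nonneg (sub_nonneg.mpr ha1) (mul_nonneg ha0 hangle)
  calc (1 - a) ^ 2 * ‖x‖ ^ 2 + a ^ 2 * ‖x - y‖ ^ 2
      = ‖(1 - a) • x‖ ^ 2 + ‖a • (x - y)‖ ^ 2 := by
        simp only [norm_smul, mul_pow, Real.norm_eq_abs, sq_abs]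
    _ ≤ ‖(1 - a) • x + a • (x - y)‖ ^ 2 :=
        norm_sq_add_norm_sq_le_norm_add_sq_of_inner_nonneg hinner
    _ = ‖x - a • y‖ ^ 2 := by rw [hsplit]

end InnerProductSpace

theorem one_sub_sq_add_sq_mul_norm_one_sub_sq_le {w : ℂ} (hw : w.re ≤ 1) {a : ℝ}
    (ha0 : 0 ≤ a) (ha1 : a ≤ 1) :
    (1 - a) ^ 2 + a ^ 2 * ‖1 - w‖ ^ 2 ≤ ‖1 - (a : ℂ) * w‖ ^ 2 := by
  have hinner : inner ℝ 1 w ≤ ‖(1 : ℂ)‖ ^ 2 := by simpa [Complex.inner] using hw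
  simpa using sq_mul_norm_sq_add_sq_mul_norm_sub_sq_le_norm_sub_smul_sq hinner ha0 ha1

theorem norm_fourierSeq_le_tsum_abs {f : ℕ → ℝ} (hf : Summable f) (z : ℝ) :
    ‖fourierSeq f z‖ ≤ ∑' k, |f k| := by
  have hterm (k : ℕ) :
      ‖(f k : ℂ) * Complex.exp (-(2 * Real.pi * Complex.I * k * z))‖ = |f k| := by
    simp [Complex.norm_exp]
  exact tsum_of_norm_bounded hf.abs.hasSum fun k ↦ (hterm k).le

theorem fourier_modulus_lower_bound_general {f : ℕ → ℝ} (hf : Summable f)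
    (hf1 : ∑' k, |f k| ≤ 1) {a : ℝ} (ha0 : 0 ≤ a) (ha1 : a ≤ 1) (z : ℝ) :
    (1 - a) ^ 2 + a ^ 2 * ‖1 - fourierSeq f z‖ ^ 2 ≤ ‖1 - (a : ℂ) * fourierSeq f z‖ ^ 2 :=
  have hre : (fourierSeq f z).re ≤ 1 :=
    (Complex.re_le_norm _).trans <| (norm_fourierSeq_le_tsum_abs hf z).trans hf1
  one_sub_sq_add_sq_mul_norm_one_sub_sq_le hre ha0 ha1

/-- for `a ∈ [1/2, 1)` and every `z`,
`|1 − a φ̂(z)|² ≥ (1−a)² + |1 − φ̂(z)|²/4`. -/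
theorem fourier_modulus_lower_bound
    (φ : ℕ → ℝ) (hφnn : ∀ i, 0 ≤ φ i) (hφ0 : φ 0 = 0) (hφsum : ∑' i : ℕ, φ i = 1) :
    ∀ a : ℝ, 1 / 2 ≤ a → a < 1 → ∀ z : ℝ,
      (1 - a) ^ 2 + ‖1 - fourierSeq φ z‖ ^ 2 / 4 ≤
        ‖1 - (a : ℂ) * fourierSeq φ z‖ ^ 2 := by
  intro a ha ha1 z
  have hsummable : Summable φ := by
    by_contra h
    simp [tsum_eq_zero_of_not_summable h] at hφsum
  have habs : ∑' k, |φ k| ≤ 1 := by simp only [abs_of_nonneg (hφnn _), hφsum, le_refl]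
  have hquarter : 1 / 4 ≤ a ^ 2 := by nlinarith
  calc (1 - a) ^ 2 + ‖1 - fourierSeq φ z‖ ^ 2 / 4
      = (1 - a) ^ 2 + 1 / 4 * ‖1 - fourierSeq φ z‖ ^ 2 := by ring
    _ ≤ (1 - a) ^ 2 + a ^ 2 * ‖1 - fourierSeq φ z‖ ^ 2 := by gcongr
    _ ≤ ‖1 - (a : ℂ) * fourierSeq φ z‖ ^ 2 :=
        fourier_modulus_lower_bound_general hsummable habs (by linarith) ha1.le z
end
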